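/- arXiv:1512.07382 — 4 statements merged into one kernel-verified Lean document; each statement's English description precedes it below -/
import Mathlib

section
/- Let f ∈ L^∞[1,∞) and define g : ℕ → ℝ by g(n) = ∫_n^{n+1} f(t) dt. Then g is bounded and ψ(f) = ψ(g̃) for every ψ ∈ ℳ, where g̃ ∈ L^∞[1,∞) is given by g̃(x) = g(⌊x⌋). -/
open Filter MeasureTheory Topology

noncomputable section

/-- Lebesgue measure restricted to `[1,∞)`. -/
abbrev muIci : Measure ℝ := volume.restrict (Set.Ici (1:ℝ))

/-- `L^∞[1,∞)`. -/
abbrev Linf : Type := Lp ℝ ⊤ muIci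

/-- `M̄(f) = limsup_{x→∞} (1/x) ∫_1^x f(t) dt`. -/
def Mbar (f : Linf) : ℝ :=
  limsup (fun x : ℝ => (1 / x) * ∫ t in Set.Icc (1:ℝ) x, f t) atTop

lemma Linf_bound (u : Linf) : ∀ᵐ t ∂(volume : Measure ℝ), 1 ≤ t → |u t| ≤ ‖u‖ := by
  have h := ae_le_eLpNormEssSup (f := u) (μ := muIci)
  rw [ae_restrict_iff' measurableSet_Ici] at h
  filter_upwards [h] with t ht h1
  have h2 := ht h1
  have h3 : eLpNormEssSup u muIci ≠ ⊤ := by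
    have := Lp.eLpNorm_ne_top u
    rwa [eLpNorm_exponent_top] at this
  rw [Lp.norm_def, eLpNorm_exponent_top]
  have h4 := ENNReal.toReal_mono h3 h2
  simpa using h4

lemma Linf_intInt (u : Linf) {a b : ℝ} (ha : 1 ≤ a) (hb : 1 ≤ b) :
    IntervalIntegrable u volume a b := by
  rw [intervalIntegrable_iff]
  have hsub : Set.uIoc a b ⊆ Set.Ici 1 := by
    intro t ht
    exact (le_min ha hb).trans ht.1.le
  refine Measure.integrableOn_of_bounded (M := ‖u‖) (by simp [Set.uIoc]) ?_ ?_
  · exact (Lp.stronglyMeasurable u).aestronglyMeasurable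
  · rw [ae_restrict_iff' measurableSet_uIoc]
    filter_upwards [Linf_bound u] with t ht h1
    exact ht (hsub h1)

lemma Linf_int_bound (u : Linf) {a b : ℝ} (ha : 1 ≤ a) (hab : a ≤ b) :
    |∫ t in a..b, u t| ≤ ‖u‖ * (b - a) := by
  have := intervalIntegral.norm_integral_le_of_norm_le_const_ae (a := a) (b := b) (C := ‖u‖)
    (f := u) (by
      filter_upwards [Linf_bound u] with t ht h1
      rw [Set.uIoc_of_le hab] at h1
      exact ht (ha.trans h1.1.le))
  rwa [abs_of_nonneg (sub_nonneg.2 hab)] at this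

lemma Mbar_zero (u : Linf) (hu : ∀ n : ℕ, 1 ≤ n → ∫ t in (n:ℝ)..((n:ℝ)+1), u t = 0) :
    Mbar u = 0 := by
  have hF : ∀ n : ℕ, 1 ≤ n → ∫ t in (1:ℝ)..(n:ℝ), u t = 0 := by
    intro n hn
    induction n, hn using Nat.le_induction with
    | base => simp
    | succ k hk ih =>
      have hk' : (1:ℝ) ≤ k := by exact_mod_cast hk
      push_cast
      rw [← intervalIntegral.integral_add_adjacent_intervals (b := (k:ℝ))
        (Linf_intInt u le_rfl hk') (Linf_intInt u hk' (by linarith)), ih, hu k hk, add_zero]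
  have hB : ∀ x : ℝ, 1 ≤ x → |∫ t in Set.Icc (1:ℝ) x, u t| ≤ ‖u‖ := by
    intro x hx
    have hn : 1 ≤ ⌊x⌋₊ := Nat.le_floor (by simpa using hx)
    have hn' : (1:ℝ) ≤ ⌊x⌋₊ := by exact_mod_cast hn
    have h1 : (⌊x⌋₊ : ℝ) ≤ x := Nat.floor_le (by linarith)
    have h2 := Nat.lt_floor_add_one x
    rw [integral_Icc_eq_integral_Ioc, ← intervalIntegral.integral_of_le hx,
      ← intervalIntegral.integral_add_adjacent_intervals (b := (⌊x⌋₊:ℝ))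
        (Linf_intInt u le_rfl hn') (Linf_intInt u hn' hx), hF _ hn, zero_add]
    refine (Linf_int_bound u hn' h1).trans ?_
    have := norm_nonneg u
    nlinarith
  unfold Mbar
  apply Tendsto.limsup_eq
  have ht : Tendsto (fun x : ℝ => ‖u‖ * x⁻¹) atTop (𝓝 0) := by
    simpa using (tendsto_inv_atTop_zero (𝕜 := ℝ)).const_mul ‖u‖
  refine squeeze_zero_norm' ?_ ht
  filter_upwards [eventually_ge_atTop (1:ℝ)] with x hx
  have hx0 : 0 ≤ x⁻¹ := by positivity
  rw [Real.norm_eq_abs, abs_mul, one_div, abs_of_nonneg hx0, mul_comm]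
  exact mul_le_mul_of_nonneg_right (hB x hx) hx0

lemma int_congr_muIci {u v : ℝ → ℝ} (h : u =ᵐ[muIci] v) (n : ℕ) (hn : 1 ≤ n) :
    ∫ t in (n:ℝ)..((n:ℝ)+1), u t = ∫ t in (n:ℝ)..((n:ℝ)+1), v t := by
  have hn' : (1:ℝ) ≤ n := by exact_mod_cast hn
  rw [Filter.EventuallyEq, ae_restrict_iff' measurableSet_Ici] at h
  apply intervalIntegral.integral_congr_ae
  filter_upwards [h] with t ht h1
  rw [Set.uIoc_of_le (by linarith)] at h1
  exact ht (hn'.trans h1.1.le)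

lemma int_step (g : ℕ → ℝ) (n : ℕ) :
    ∫ t in (n:ℝ)..((n:ℝ)+1), g ⌊t⌋₊ = g n := by
  have : ∫ t in (n:ℝ)..((n:ℝ)+1), g ⌊t⌋₊ = ∫ t in (n:ℝ)..((n:ℝ)+1), g n := by
    apply intervalIntegral.integral_congr_ae
    have hne : ∀ᵐ t ∂(volume : Measure ℝ), t ≠ (n:ℝ)+1 := by
      simp [ae_iff]
    filter_upwards [hne] with t ht h1
    rw [Set.uIoc_of_le (by linarith)] at h1
    have : ⌊t⌋₊ = n := by
      rw [Nat.floor_eq_iff ((Nat.cast_nonneg n).trans h1.1.le)]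
      exact ⟨h1.1.le, lt_of_le_of_ne h1.2 ht⟩
    rw [this]
  rw [this]
  simp

/-- For `f ∈ L^∞[1,∞)`, the function `g(n) = ∫_n^{n+1} f(t) dt` is
bounded, the step function `g̃(x) = g(⌊x⌋)` belongs to `L^∞[1,∞)`, and `ψ(f) = ψ(g̃)`
for every `ψ ∈ ℳ`. -/
theorem stmt4 (f : Linf) :
    (∃ C : ℝ, ∀ n : ℕ, |∫ t in (n:ℝ)..((n:ℝ) + 1), f t| ≤ C) ∧
    MemLp (fun x : ℝ => ∫ t in (⌊x⌋₊ : ℝ)..((⌊x⌋₊ : ℝ) + 1), f t) ⊤ muIci ∧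
    (∀ ψ : Linf →ₗ[ℝ] ℝ, (∀ u : Linf, ψ u ≤ Mbar u) →
      ∀ h : Linf,
        (⇑h : ℝ → ℝ) =ᵐ[muIci] (fun x : ℝ => ∫ t in (⌊x⌋₊ : ℝ)..((⌊x⌋₊ : ℝ) + 1), f t) →
        ψ f = ψ h) := by
  obtain ⟨C, hC⟩ : ∃ C : ℝ, ∀ n : ℕ, |∫ t in (n:ℝ)..((n:ℝ) + 1), f t| ≤ C := by
    refine ⟨‖f‖ + |∫ t in ((0:ℕ):ℝ)..(((0:ℕ):ℝ) + 1), f t|, fun n => ?_⟩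
    rcases Nat.eq_zero_or_pos n with rfl | hn
    · have := norm_nonneg f
      linarith
    · have hn' : (1:ℝ) ≤ n := by exact_mod_cast hn
      have h1 := Linf_int_bound f hn' (b := (n:ℝ)+1) (by linarith)
      have h2 := abs_nonneg (∫ t in ((0:ℕ):ℝ)..(((0:ℕ):ℝ) + 1), f t)
      have h3 : ((n:ℝ) + 1 - n) = 1 := by ring
      rw [h3, mul_one] at h1
      linarith
  refine ⟨⟨C, hC⟩, ?_, ?_⟩
  · refine memLp_top_of_bound ?_ C (Eventually.of_forall fun x => hC _)
    have hm : Measurable (fun n : ℕ => ∫ t in (n:ℝ)..((n:ℝ) + 1), f t) := measurable_from_nat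
    exact (hm.comp Nat.measurable_floor).aestronglyMeasurable
  · intro ψ hψ h hh
    have hI : ∀ n : ℕ, 1 ≤ n →
        ∫ t in (n:ℝ)..((n:ℝ)+1), h t = ∫ t in (n:ℝ)..((n:ℝ)+1), f t := by
      intro n hn
      rw [int_congr_muIci hh n hn]
      exact int_step (fun n : ℕ => ∫ t in (n:ℝ)..((n:ℝ) + 1), f t) n
    have key : ∀ a b : Linf, (∀ n : ℕ, 1 ≤ n →
        ∫ t in (n:ℝ)..((n:ℝ)+1), a t = ∫ t in (n:ℝ)..((n:ℝ)+1), b t) → ψ a ≤ ψ b := by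
      intro a b hab
      have h0 : Mbar (a - b) = 0 := by
        apply Mbar_zero
        intro n hn
        have hn' : (1:ℝ) ≤ n := by exact_mod_cast hn
        rw [int_congr_muIci (Lp.coeFn_sub a b) n hn]
        simp only [Pi.sub_apply]
        rw [intervalIntegral.integral_sub (Linf_intInt a hn' (by linarith))
          (Linf_intInt b hn' (by linarith)), hab n hn, sub_self]
      have h1 := hψ (a - b)
      rw [h0, map_sub] at h1
      linarith
    exact le_antisymm (key f h fun n hn => (hI n hn).symm) (key h f hI)
end
end

section
/- Let 𝒰 be an ultrafilter on [1,∞) that contains no bounded subset of [1,∞). Then there exist a free ultrafilter η on ℕ and t ∈ [0,1] such that for every f ∈ L^∞[1,∞), 𝒰-lim_x (1/x)∫_1^x f(s) ds = ψ_{(η,t)}(f). -/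
open Filter MeasureTheory

noncomputable section

lemma aux_bound (f : ℝ → ℝ) (hf : MemLp f ⊤ muIci) : ∃ C : ℝ, 0 ≤ C ∧
    (∀ x : ℝ, 1 ≤ x → |∫ s in Set.Icc (1:ℝ) x, f s| ≤ C * x) ∧
    (∀ x y : ℝ, 1 ≤ x → 1 ≤ y →
      |(∫ s in Set.Icc (1:ℝ) x, f s) - ∫ s in Set.Icc (1:ℝ) y, f s| ≤ C * |x - y|) := by
  obtain ⟨C, hC⟩ : ∃ C : ℝ, ∀ᵐ s ∂muIci, ‖f s‖ ≤ C := by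
    refine ⟨(eLpNorm f ⊤ muIci).toReal, ?_⟩
    have h := ae_le_eLpNormEssSup (f := f) (μ := muIci)
    filter_upwards [h] with s hs
    have h3 := ENNReal.toReal_mono (by simpa using hf.2.ne) hs
    simpa using h3
  have hC' : ∀ᵐ s ∂volume, 1 ≤ s → ‖f s‖ ≤ max C 0 := by
    have := (ae_restrict_iff' (measurableSet_Ici (a := (1:ℝ)))).1 hC
    filter_upwards [this] with s hs h
    exact (hs h).trans (le_max_left _ _)
  have hint : ∀ x : ℝ, 1 ≤ x → IntervalIntegrable f volume 1 x := by
    intro x hx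
    rw [intervalIntegrable_iff_integrableOn_Ioc_of_le hx]
    have h3 : MemLp f ⊤ (volume.restrict (Set.Ioc 1 x)) :=
      hf.mono_measure (Measure.restrict_mono (fun s hs => hs.1.le) le_rfl)
    exact h3.integrable le_top
  have hconv : ∀ x : ℝ, 1 ≤ x → ∫ s in Set.Icc (1:ℝ) x, f s = ∫ s in (1:ℝ)..x, f s := by
    intro x hx
    rw [intervalIntegral.integral_of_le hx, integral_Icc_eq_integral_Ioc]
  have key : ∀ x y : ℝ, 1 ≤ x → 1 ≤ y → |∫ s in y..x, f s| ≤ max C 0 * |x - y| := by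
    intro x y hx hy
    rw [← Real.norm_eq_abs]
    refine intervalIntegral.norm_integral_le_of_norm_le_const_ae ?_
    filter_upwards [hC'] with s hs h
    exact hs ((le_min hy hx).trans h.1.le)
  refine ⟨max C 0, le_max_right _ _, ?_, ?_⟩
  · intro x hx
    rw [hconv x hx]
    refine (key x 1 hx le_rfl).trans ?_
    apply mul_le_mul_of_nonneg_left _ (le_max_right _ _)
    rw [abs_of_nonneg] <;> linarith
  · intro x y hx hy
    rw [hconv x hx, hconv y hy, intervalIntegral.integral_interval_sub_left (hint x hx) (hint y hy)]
    exact key x y hx hy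

/-- For every ultrafilter `𝒰` on `[1,∞)` containing no bounded subset of
`[1,∞)` there are a free ultrafilter `η` on `ℕ` and `t ∈ [0,1]` such that
`𝒰-lim_x (1/x)∫_1^x f = ψ_{(η,t)}(f) = η-lim_n 2^{-(n+t)} ∫_1^{2^{n+t}} f` for every
`f ∈ L^∞[1,∞)`. -/
theorem stmt6 (𝒰 : Ultrafilter ℝ) (h1 : Set.Ici (1:ℝ) ∈ 𝒰)
    (h2 : ∀ B ⊆ Set.Ici (1:ℝ), Bornology.IsBounded B → B ∉ 𝒰) :
    ∃ (η : Ultrafilter ℕ) (t : ℝ), (η : Filter ℕ) ≤ Filter.cofinite ∧ t ∈ Set.Icc (0:ℝ) 1 ∧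
      ∀ f : ℝ → ℝ, MemLp f ⊤ muIci →
        limUnder (𝒰 : Filter ℝ) (fun x : ℝ => (1 / x) * ∫ s in Set.Icc (1:ℝ) x, f s) =
          limUnder (η : Filter ℕ)
            (fun n : ℕ => (2:ℝ) ^ (-((n : ℝ) + t)) *
              ∫ y in Set.Icc (1:ℝ) ((2:ℝ) ^ ((n : ℝ) + t)), f y) := by
  have htop : (𝒰 : Filter ℝ) ≤ atTop := by
    rw [atTop_basis.ge_iff]
    intro a _
    by_contra h
    have h3 : (Set.Ici a)ᶜ ∈ 𝒰 := Ultrafilter.compl_mem_iff_notMem.2 h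
    refine h2 (Set.Ici 1 ∩ (Set.Ici a)ᶜ) Set.inter_subset_left ?_ (inter_mem h1 h3)
    refine (Metric.isBounded_Icc 1 a).subset ?_
    rintro x ⟨hx, hx'⟩
    simp only [Set.mem_compl_iff, Set.mem_Ici, not_le] at hx hx'
    exact ⟨hx, hx'.le⟩
  set N : ℝ → ℕ := fun x => ⌊Real.logb 2 x⌋₊ with hN
  set r : ℝ → ℝ := fun x => Real.logb 2 x - N x with hr
  have hrmem : ∀ x : ℝ, 1 ≤ x → r x ∈ Set.Icc (0:ℝ) 1 := by
    intro x hx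
    have h0 : 0 ≤ Real.logb 2 x := Real.logb_nonneg (by norm_num) hx
    have ha := Nat.floor_le h0
    have hb := (Nat.lt_floor_add_one (Real.logb 2 x)).le
    constructor <;> simp only [hr, hN] <;> linarith
  obtain ⟨t, ht, hlim⟩ : ∃ t ∈ Set.Icc (0:ℝ) 1, Tendsto r 𝒰 (nhds t) := by
    have := (isCompact_Icc (a := (0:ℝ)) (b := 1)).ultrafilter_le_nhds (𝒰.map r) (by
      rw [le_principal_iff, Ultrafilter.coe_map, mem_map]
      exact mem_of_superset h1 fun x hx => hrmem x hx)
    exact this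
  refine ⟨𝒰.map N, t, ?_, ht, ?_⟩
  · rw [Nat.cofinite_eq_atTop]
    exact (tendsto_nat_floor_atTop.comp (Real.tendsto_logb_atTop (by norm_num))).mono_left htop
  intro f hf
  obtain ⟨C, hC0, hC1, hC2⟩ := aux_bound f hf
  set F : ℝ → ℝ := fun x : ℝ => (1 / x) * ∫ s in Set.Icc (1:ℝ) x, f s with hF
  obtain ⟨L, -, hL⟩ : ∃ L ∈ Set.Icc (-C) C, Tendsto F 𝒰 (nhds L) := by
    have := (isCompact_Icc (a := -C) (b := C)).ultrafilter_le_nhds (𝒰.map F) (by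
      rw [le_principal_iff, Ultrafilter.coe_map, mem_map]
      refine mem_of_superset h1 fun x hx => ?_
      have hx : (1:ℝ) ≤ x := hx
      have hx0 : 0 < x := by linarith
      refine abs_le.1 ?_
      simp only [hF]
      rw [abs_mul, abs_of_pos (by positivity : 0 < 1 / x), one_div, inv_mul_le_iff₀ hx0, mul_comm]
      exact hC1 x hx)
    exact this
  set y : ℝ → ℝ := fun x => (2:ℝ) ^ ((N x : ℝ) + t) with hy
  have hdiff : Tendsto (fun x => F x - F (y x)) 𝒰 (nhds 0) := by
    have hb : Tendsto (fun x => 2 * C * |1 - (2:ℝ) ^ (t - r x)|) 𝒰 (nhds 0) := by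
      have h5 : Tendsto (fun x => (2:ℝ) ^ (t - r x)) 𝒰 (nhds ((2:ℝ) ^ (t - t))) :=
        tendsto_const_nhds.rpow (tendsto_const_nhds.sub hlim) (Or.inl (by norm_num))
      have h6 := ((tendsto_const_nhds (x := (1:ℝ))).sub h5).abs.const_mul (2 * C)
      simpa using h6
    refine squeeze_zero_norm' ?_ hb
    filter_upwards [h1] with x hx
    have hx : (1:ℝ) ≤ x := hx
    have hx0 : 0 < x := by linarith
    have hy1 : 1 ≤ y x := Real.one_le_rpow (by norm_num) (add_nonneg (Nat.cast_nonneg _) ht.1)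
    have hy0 : 0 < y x := by linarith
    have hq : (2:ℝ) ^ (t - r x) = y x / x := by
      have : t - r x = ((N x : ℝ) + t) - Real.logb 2 x := by simp only [hr]; ring
      rw [this, Real.rpow_sub (by norm_num), Real.rpow_logb (by norm_num) (by norm_num) hx0]
    rw [hq]
    have e1 := hC2 x (y x) hx hy1
    have e2 := hC1 (y x) hy1
    simp only [hF]
    generalize (∫ s in Set.Icc (1:ℝ) x, f s) = A at *
    generalize (∫ s in Set.Icc (1:ℝ) (y x), f s) = B at *
    generalize y x = z at *
    have e3 : |1 - z / x| = |x - z| / x := by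
      rw [show 1 - z / x = (x - z) / x by field_simp, abs_div, abs_of_pos hx0]
    have e4 : 1 / x * A - 1 / z * B = (A - B) / x - B / z * ((x - z) / x) := by
      field_simp; ring
    rw [e3, e4, Real.norm_eq_abs]
    refine (abs_sub _ _).trans ?_
    rw [abs_mul, abs_div, abs_div, abs_div, abs_of_pos hx0, abs_of_pos hy0]
    have e5 : |A - B| / x ≤ C * (|x - z| / x) := by
      rw [← mul_div_assoc]; gcongr
    have e6 : |B| / z ≤ C := by rwa [div_le_iff₀ hy0]
    have e7 : |B| / z * (|x - z| / x) ≤ C * (|x - z| / x) := by gcongr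
    linarith
  have hLy : Tendsto (fun x => F (y x)) 𝒰 (nhds L) := by
    have := hL.sub hdiff
    simpa using this
  rw [hL.limUnder_eq]
  symm
  apply Tendsto.limUnder_eq
  rw [Ultrafilter.coe_map, tendsto_map'_iff]
  refine hLy.congr fun x => ?_
  simp only [hF, hy, Function.comp]
  rw [Real.rpow_neg (by norm_num), one_div]
end
end

section
/- Let f ∈ L^∞[1,∞), s ≥ 0, η a free ultrafilter on ℕ, and t ∈ [0,1). Set k = ⌊t+s⌋, t′ = t+s−k ∈ [0,1), and let η′ be the image ultrafilter of η under the map n ↦ n+k. Then ψ_{(η,t)}(x ↦ f(2^s x)) = ψ_{(η′,t′)}(f). (The group action f ↦ f(2^s ·) on L^∞[1,∞) is intertwined with the suspension flow on the parameters (η,t).) -/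
open Filter MeasureTheory

noncomputable section

theorem aux_limUnder (l : Filter ℕ) (g : ℕ → ℕ) (A G : ℕ → ℝ)
    (h : ∀ x : ℝ, Tendsto A l (nhds x) ↔ Tendsto (fun n => G (g n)) l (nhds x)) :
    limUnder l A = limUnder (Filter.map g l) G := by
  have h2 : (fun x : ℝ => Filter.map A l ≤ nhds x) =
      (fun x : ℝ => Filter.map G (Filter.map g l) ≤ nhds x) := by
    funext x
    rw [Filter.map_map]
    exact propext (h x)
  unfold limUnder lim
  rw [h2]

/-- For `f ∈ L^∞[1,∞)`, `s ≥ 0`, a free ultrafilter `η` on `ℕ` and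
`t ∈ [0,1)`: with `k = ⌊t+s⌋`, `t′ = t+s−k` and `η′` the image of `η` under `n ↦ n+k`,
one has `ψ_{(η,t)}(x ↦ f(2^s x)) = ψ_{(η′,t′)}(f)`. -/
theorem stmt7 (f : ℝ → ℝ) (hf : MemLp f ⊤ muIci) (s : ℝ) (hs : 0 ≤ s)
    (η : Ultrafilter ℕ) (hη : (η : Filter ℕ) ≤ Filter.cofinite)
    (t : ℝ) (ht : t ∈ Set.Ico (0:ℝ) 1) :
    limUnder (η : Filter ℕ)
        (fun n : ℕ => (2:ℝ) ^ (-((n : ℝ) + t)) *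
          ∫ y in Set.Icc (1:ℝ) ((2:ℝ) ^ ((n : ℝ) + t)), f ((2:ℝ) ^ s * y)) =
      limUnder ((Ultrafilter.map (fun n : ℕ => n + ⌊t + s⌋₊) η : Ultrafilter ℕ) : Filter ℕ)
        (fun n : ℕ => (2:ℝ) ^ (-((n : ℝ) + (t + s - ⌊t + s⌋₊))) *
          ∫ y in Set.Icc (1:ℝ) ((2:ℝ) ^ ((n : ℝ) + (t + s - ⌊t + s⌋₊))), f y) := by
  have hS1 : (1:ℝ) ≤ (2:ℝ) ^ s := Real.one_le_rpow (by norm_num) hs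
  have hS0 : (0:ℝ) < (2:ℝ) ^ s := by positivity
  have hint : ∀ a b : ℝ, 1 ≤ a → a ≤ b → IntervalIntegrable f volume a b := by
    intro a b ha hab
    rw [intervalIntegrable_iff_integrableOn_Icc_of_le hab]
    have h1 : MemLp f ⊤ (volume.restrict (Set.Icc a b)) :=
      hf.mono_measure (Measure.restrict_mono (fun x hx => le_trans ha hx.1) le_rfl)
    exact h1.integrable le_top
  have hIcc : ∀ (g : ℝ → ℝ) (b : ℝ), 1 ≤ b →
      ∫ y in Set.Icc (1:ℝ) b, g y = ∫ y in (1:ℝ)..b, g y := by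
    intro g b hb
    rw [integral_Icc_eq_integral_Ioc, intervalIntegral.integral_of_le hb]
  set A : ℕ → ℝ := fun n : ℕ => (2:ℝ) ^ (-((n : ℝ) + t)) *
          ∫ y in Set.Icc (1:ℝ) ((2:ℝ) ^ ((n : ℝ) + t)), f ((2:ℝ) ^ s * y) with hA
  set G : ℕ → ℝ := fun n : ℕ => (2:ℝ) ^ (-((n : ℝ) + (t + s - ⌊t + s⌋₊))) *
          ∫ y in Set.Icc (1:ℝ) ((2:ℝ) ^ ((n : ℝ) + (t + s - ⌊t + s⌋₊))), f y with hG
  have key : ∀ n : ℕ, G (n + ⌊t + s⌋₊) - A n =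
      (2:ℝ) ^ (-((n : ℝ) + (t + s))) * ∫ y in (1:ℝ)..((2:ℝ) ^ s), f y := by
    intro n
    have hn : (0:ℝ) ≤ (n:ℝ) + t := add_nonneg (Nat.cast_nonneg n) ht.1
    have hN1 : (1:ℝ) ≤ (2:ℝ) ^ ((n:ℝ) + t) := Real.one_le_rpow (by norm_num) hn
    have e1 : ((n + ⌊t + s⌋₊ : ℕ) : ℝ) + (t + s - ⌊t + s⌋₊) = (n:ℝ) + (t + s) := by
      push_cast; ring
    have e2 : (2:ℝ) ^ ((n:ℝ) + (t + s)) = (2:ℝ) ^ s * (2:ℝ) ^ ((n:ℝ) + t) := by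
      rw [← Real.rpow_add (by norm_num)]; congr 1; ring
    have e3 : (2:ℝ) ^ (-((n:ℝ) + t)) = (2:ℝ) ^ (-((n:ℝ) + (t + s))) * (2:ℝ) ^ s := by
      rw [← Real.rpow_add (by norm_num)]; congr 1; ring
    have hle : (2:ℝ) ^ s ≤ (2:ℝ) ^ s * (2:ℝ) ^ ((n:ℝ) + t) :=
      le_mul_of_one_le_right hS0.le hN1
    simp only [hA, hG]
    rw [e1, e2, e3, hIcc _ _ (hS1.trans hle), hIcc _ _ hN1,
      intervalIntegral.integral_comp_mul_left f hS0.ne', mul_one,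
      ← intervalIntegral.integral_add_adjacent_intervals (hint 1 _ le_rfl hS1)
        (hint _ _ hS1 hle), smul_eq_mul]
    field_simp
    ring
  have hlim : Tendsto (fun n : ℕ => G (n + ⌊t + s⌋₊) - A n) (η : Filter ℕ) (nhds 0) := by
    have h0 : Tendsto (fun n : ℕ => (2:ℝ) ^ (-((n : ℝ) + (t + s)))) atTop (nhds 0) := by
      have h1 : Tendsto (fun n : ℕ => (n:ℝ) + (t + s)) atTop atTop :=
        tendsto_atTop_add_const_right _ _ tendsto_natCast_atTop_atTop
      have h2 := tendsto_rpow_atBot_of_base_gt_one (2:ℝ) (by norm_num)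
      exact h2.comp (tendsto_neg_atTop_atBot.comp h1)
    have h3 := h0.mul_const (∫ y in (1:ℝ)..((2:ℝ) ^ s), f y)
    rw [zero_mul] at h3
    rw [funext key]
    exact h3.mono_left (hη.trans Nat.cofinite_eq_atTop.le)
  have hiff : ∀ x : ℝ, Tendsto A (η : Filter ℕ) (nhds x) ↔
      Tendsto (fun n : ℕ => G (n + ⌊t + s⌋₊)) (η : Filter ℕ) (nhds x) := by
    intro x
    constructor
    · intro h
      simpa using h.add hlim
    · intro h
      simpa using h.sub hlim
  rw [Ultrafilter.coe_map]
  exact aux_limUnder _ _ _ _ hiff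
end
end

section
/- For every bounded uniformly continuous function g : [0,∞) → ℝ and every ε > 0 there exists f ∈ L^∞[1,∞) such that limsup_{x→∞} |g(x) − 2^{-x} ∫_1^{2^x} f(t) dt| ≤ ε. (The image of L^∞[1,∞) under the composed averaging operator f ↦ (x ↦ 2^{-x}∫_1^{2^x} f), taken modulo functions vanishing at infinity, is uniformly dense in C_ub modulo functions vanishing at infinity.) -/
open Filter MeasureTheory

noncomputable section

theorem aux_smooth (G : ℝ → ℝ) (hG : UniformContinuous G) (C : ℝ) (hC : ∀ x, |G x| ≤ C)
    (ε : ℝ) (hε : 0 < ε) :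
    ∃ h k : ℝ → ℝ, Continuous k ∧ (∀ x, HasDerivAt h (k x) x) ∧ (∃ B, ∀ x, |k x| ≤ B) ∧
      ∀ x, |h x - G x| ≤ ε := by
  obtain ⟨d, hd, hdG⟩ := Metric.uniformContinuous_iff.1 hG ε hε
  have hGc : Continuous G := hG.continuous
  have hint : ∀ a b, IntervalIntegrable G volume a b := fun a b => hGc.intervalIntegrable a b
  obtain ⟨δ, hδ, hδd⟩ : ∃ δ, 0 < δ ∧ δ < d := ⟨d / 2, by linarith, by linarith⟩
  refine ⟨fun x => δ⁻¹ * ((∫ t in (0:ℝ)..(x + δ), G t) - ∫ t in (0:ℝ)..x, G t),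
    fun x => δ⁻¹ * (G (x + δ) - G x), by fun_prop, ?_, ⟨δ⁻¹ * (C + C), ?_⟩, ?_⟩
  · intro x
    have h1 : ∀ y, HasDerivAt (fun y => ∫ t in (0:ℝ)..y, G t) (G y) y := fun y =>
      intervalIntegral.integral_hasDerivAt_right (hint _ _)
        (hGc.stronglyMeasurableAtFilter _ _) hGc.continuousAt
    exact (((h1 (x + δ)).comp_add_const x δ).sub (h1 x)).const_mul _
  · intro x
    rw [abs_mul, abs_of_pos (inv_pos.2 hδ)]
    gcongr
    exact (abs_sub _ _).trans (add_le_add (hC _) (hC _))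
  · intro x
    have e1 : (∫ t in (0:ℝ)..(x + δ), G t) - (∫ t in (0:ℝ)..x, G t) = ∫ t in x..(x + δ), G t :=
      intervalIntegral.integral_interval_sub_left (hint _ _) (hint _ _)
    have e2 : (∫ t in x..(x + δ), G t) - δ * G x = ∫ t in x..(x + δ), (G t - G x) := by
      rw [intervalIntegral.integral_sub (hint _ _) (by simp)]
      simp
    have e3 : |∫ t in x..(x + δ), (G t - G x)| ≤ ε * |x + δ - x| := by
      rw [← Real.norm_eq_abs]
      apply intervalIntegral.norm_integral_le_of_norm_le_const
      intro t ht
      rw [Set.uIoc_of_le (by linarith)] at ht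
      have := @hdG t x (by rw [Real.dist_eq, abs_lt]; constructor <;> linarith [ht.1, ht.2])
      rw [← dist_eq_norm]; exact this.le
    rw [add_sub_cancel_left, abs_of_pos hδ] at e3
    have e4 : δ⁻¹ * ((∫ t in (0:ℝ)..(x + δ), G t) - ∫ t in (0:ℝ)..x, G t) - G x
        = δ⁻¹ * ∫ t in x..(x + δ), (G t - G x) := by
      rw [e1, ← e2]; field_simp
    show |δ⁻¹ * ((∫ t in (0:ℝ)..(x + δ), G t) - ∫ t in (0:ℝ)..x, G t) - G x| ≤ ε
    rw [e4, abs_mul, abs_of_pos (inv_pos.2 hδ), inv_mul_le_iff₀ hδ]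
    linarith

/-- For every bounded uniformly continuous `g : [0,∞) → ℝ` and every
`ε > 0` there is `f ∈ L^∞[1,∞)` with
`limsup_{x→∞} |g(x) − 2^{-x} ∫_1^{2^x} f(t) dt| ≤ ε`. -/
theorem stmt11 (g : ℝ → ℝ)
    (hgu : UniformContinuousOn g (Set.Ici (0:ℝ)))
    (hgb : ∃ C : ℝ, ∀ x ∈ Set.Ici (0:ℝ), |g x| ≤ C)
    (ε : ℝ) (hε : 0 < ε) :
    ∃ f : ℝ → ℝ, MemLp f ⊤ muIci ∧
      limsup (fun x : ℝ =>
          |g x - (2:ℝ) ^ (-x) * ∫ t in Set.Icc (1:ℝ) ((2:ℝ) ^ x), f t|) atTop ≤ ε := by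
  obtain ⟨C, hC⟩ := hgb
  have hG : UniformContinuous (fun x : ℝ => g (max x 0)) := by
    rw [Metric.uniformContinuous_iff]
    rw [Metric.uniformContinuousOn_iff] at hgu
    intro e he
    obtain ⟨d, hd, h⟩ := hgu e he
    refine ⟨d, hd, fun {a b} hab => h _ (Set.mem_Ici.2 (le_max_right _ _)) _ (Set.mem_Ici.2 (le_max_right _ _)) ?_⟩
    rw [Real.dist_eq] at *
    exact (abs_max_sub_max_le_abs a b 0).trans_lt hab
  obtain ⟨h, k, hk, hhk, ⟨B, hB⟩, hh⟩ := aux_smooth _ hG C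
    (fun x => hC _ (Set.mem_Ici.2 (le_max_right _ _))) (ε / 2) (by linarith)
  have hhc : Continuous h := continuous_iff_continuousAt.2 fun x => (hhk x).continuousAt
  have hl2 : 0 < Real.log 2 := Real.log_pos (by norm_num)
  refine ⟨fun s => h (Real.log s / Real.log 2) + k (Real.log s / Real.log 2) / Real.log 2, ?_, ?_⟩
  · refine memLp_top_of_bound ?_ (C + ε / 2 + B / Real.log 2) (Eventually.of_forall fun s => ?_)
    · have hm : Measurable (fun s : ℝ => Real.log s / Real.log 2) :=
        Real.measurable_log.div_const _
      exact ((hhc.measurable.comp hm).add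
        ((hk.measurable.comp hm).div_const _)).aestronglyMeasurable
    · refine (norm_add_le _ _).trans (add_le_add ?_ ?_)
      · have h1 := hh (Real.log s / Real.log 2)
        have h2 := hC (max (Real.log s / Real.log 2) 0) (Set.mem_Ici.2 (le_max_right _ _))
        rw [Real.norm_eq_abs]
        rw [abs_le] at *
        constructor <;> linarith [h1.1, h1.2, h2.1, h2.2]
      · rw [norm_div, Real.norm_eq_abs, Real.norm_eq_abs, abs_of_pos hl2]
        gcongr
        exact hB _
  · have key : ∀ x : ℝ, 0 ≤ x → ∫ t in Set.Icc (1:ℝ) ((2:ℝ) ^ x),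
        (h (Real.log t / Real.log 2) + k (Real.log t / Real.log 2) / Real.log 2)
        = 2 ^ x * h x - h 0 := by
      intro x hx
      have h1x : (1:ℝ) ≤ 2 ^ x := Real.one_le_rpow (by norm_num) hx
      rw [integral_Icc_eq_integral_Ioc, ← intervalIntegral.integral_of_le h1x]
      have hpos : ∀ t ∈ Set.uIcc (1:ℝ) (2 ^ x), t ≠ 0 := by
        intro t ht
        rw [Set.uIcc_of_le h1x] at ht
        have h0 : 0 < t := by linarith [ht.1]
        exact h0.ne'
      rw [intervalIntegral.integral_eq_sub_of_hasDerivAt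
        (f := fun s => s * h (Real.log s / Real.log 2))]
      · rw [Real.log_rpow (by norm_num)]
        simp [hl2.ne']
      · intro t ht
        have ht0 := hpos t ht
        have := (hasDerivAt_id t).mul
          ((hhk (Real.log t / Real.log 2)).comp t ((Real.hasDerivAt_log ht0).div_const _))
        have e : h (Real.log t / Real.log 2) + k (Real.log t / Real.log 2) / Real.log 2
            = 1 * h (Real.log t / Real.log 2)
              + t * (k (Real.log t / Real.log 2) * (t⁻¹ / Real.log 2)) := by
          field_simp
        rw [e]
        exact this
      · apply ContinuousOn.intervalIntegrable
        have hlc : ContinuousOn (fun s : ℝ => Real.log s / Real.log 2) (Set.uIcc (1:ℝ) (2 ^ x)) :=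
          (ContinuousOn.log continuousOn_id hpos).div_const _
        exact (hhc.comp_continuousOn hlc).add ((hk.comp_continuousOn hlc).div_const _)
    have hlim : Tendsto (fun x : ℝ => (2:ℝ) ^ (-x) * |h 0|) atTop (nhds 0) := by
      have : Tendsto (fun x : ℝ => (2:ℝ) ^ (-x)) atTop (nhds 0) :=
        (tendsto_rpow_atBot_of_base_gt_one 2 (by norm_num)).comp tendsto_neg_atTop_atBot
      simpa using this.mul_const |h 0|
    refine limsup_le_of_le
      (IsCoboundedUnder.of_frequently_ge (a := 0) (Eventually.of_forall fun x => abs_nonneg _).frequently) ?_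
    filter_upwards [eventually_ge_atTop 0, hlim.eventually (gt_mem_nhds (half_pos hε))] with x hx hx2
    rw [key x hx, mul_sub, ← mul_assoc, ← Real.rpow_add (by norm_num)]
    have h1 := hh x
    simp only [max_eq_left hx] at h1
    have h3 : |(2:ℝ) ^ (-x) * h 0| < ε / 2 := by
      rwa [abs_mul, abs_of_pos (by positivity : (0:ℝ) < 2 ^ (-x))]
    simp only [neg_add_cancel, Real.rpow_zero, one_mul]
    rw [abs_le] at *
    rw [abs_lt] at h3
    constructor <;> linarith [h1.1, h1.2, h3.1, h3.2]
end
end
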